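/- arXiv:math/0108117 — 3 statements merged into one kernel-verified Lean document; each statement's English description precedes it below -/
import Mathlib

section
/- Let μ : R ⊗[S] R → R be the multiplication map and π : R → R/S the quotient map onto R/S := R ⧸ (range of the algebra map S → R), taken as S-modules. Then the S-linear map θ : ker μ → R ⊗[S] (R/S) given by restricting Σ rᵢ ⊗ rᵢ' ↦ Σ rᵢ ⊗ π(rᵢ') to ker μ is bijective, and its inverse is the well-defined map determined by r ⊗ π(r') ↦ r ⊗ r' − r r' ⊗ 1 (which is independent of the choice of representative r' of π(r')). Both maps are also R-linear for the R-module structures given by multiplication in the left tensor factor. -/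
/-!
The kernel of `R ⊗ R → R ⊗ (R/S)` consists of the elements `r ⊗ 1`, by right exactness of the
tensor product. Multiplication sends `r ⊗ 1` to `r`, so this kernel meets `ker μ` trivially and
`θ` is injective. Since `π 1 = 0`, the element `r ⊗ r' - r r' ⊗ 1` of `ker μ` is a preimage of
`r ⊗ π r'`, which gives surjectivity and the formula for the inverse. Independence of the
representative follows from injectivity.
-/

open TensorProduct

variable {S R : Type*} [CommRing S] [CommRing R] [Algebra S R]

/-- Only elements `r ⊗ 1` are killed by `R ⊗ R → R ⊗ (R/S)`: right exactness of the tensor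
product identifies its kernel with the image of `R ⊗ S ≅ R`. -/
lemma exists_eq_tmul_one_of_lTensor_mkQ_eq_zero {x : R ⊗[S] R}
    (hx : ((Submodule.mkQ (LinearMap.range (Algebra.linearMap S R))).lTensor R) x = 0) :
    ∃ r : R, x = r ⊗ₜ[S] (1 : R) := by
  have hex : Function.Exact (Algebra.linearMap S R)
      (Submodule.mkQ (LinearMap.range (Algebra.linearMap S R))) :=
    LinearMap.exact_iff.mpr (Submodule.ker_mkQ _)
  obtain ⟨y, rfl⟩ := (lTensor_exact R hex (Submodule.mkQ_surjective _) x).mp hx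
  refine ⟨TensorProduct.rid S R y, ?_⟩
  induction y using TensorProduct.induction_on with
  | zero => simp
  | tmul r s => simp [Algebra.algebraMap_eq_smul_one, TensorProduct.smul_tmul]
  | add y z hy hz =>
    rw [map_add, map_add, TensorProduct.add_tmul, ← hy, ← hz]
    all_goals exact (lTensor_exact R hex (Submodule.mkQ_surjective _) _).mpr ⟨_, rfl⟩

lemma mkQ_one_eq_zero :
    Submodule.mkQ (LinearMap.range (Algebra.linearMap S R)) (1 : R) = 0 := by
  rw [Submodule.mkQ_apply, Submodule.Quotient.mk_eq_zero]
  exact ⟨1, by simp⟩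

lemma mul'_smul_left (a : R) (x : R ⊗[S] R) :
    LinearMap.mul' S R (a • x) = a * LinearMap.mul' S R x := by
  induction x using TensorProduct.induction_on with
  | zero => simp
  | tmul r s => simp [TensorProduct.smul_tmul', mul_assoc]
  | add y z hy hz => rw [smul_add, map_add, map_add, hy, hz, mul_add]

lemma lTensor_smul_left {M : Type*} [AddCommGroup M] [Module S M] (f : R →ₗ[S] M)
    (a : R) (x : R ⊗[S] R) : f.lTensor R (a • x) = a • f.lTensor R x := by
  induction x using TensorProduct.induction_on with
  | zero => simp
  | tmul r s => simp [TensorProduct.smul_tmul']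
  | add y z hy hz => rw [smul_add, map_add, map_add, hy, hz, smul_add]

lemma tmul_sub_mem_ker_mul' (r r' : R) :
    r ⊗ₜ[S] r' - (r * r') ⊗ₜ[S] (1 : R) ∈ LinearMap.ker (LinearMap.mul' S R) := by
  simp

lemma lTensor_mkQ_tmul_sub (r r' : R) :
    ((Submodule.mkQ (LinearMap.range (Algebra.linearMap S R))).lTensor R)
        (r ⊗ₜ[S] r' - (r * r') ⊗ₜ[S] (1 : R)) =
      r ⊗ₜ[S] (Submodule.mkQ (LinearMap.range (Algebra.linearMap S R)) r') := by
  rw [map_sub, LinearMap.lTensor_tmul, LinearMap.lTensor_tmul, mkQ_one_eq_zero,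
    TensorProduct.tmul_zero, sub_zero]

/-- Let `S` be a commutative ring and `R` a commutative `S`-algebra.
Let `μ : R ⊗[S] R → R` be the multiplication map and `π : R → R/S` the quotient map
onto `R/S = R ⧸ (range of S → R)`.  Then the `S`-linear map
`θ : ker μ → R ⊗[S] (R/S)` obtained by restricting `Σ rᵢ ⊗ rᵢ' ↦ Σ rᵢ ⊗ π(rᵢ')` to
`ker μ` is bijective, its inverse is determined by `r ⊗ π(r') ↦ r ⊗ r' − r r' ⊗ 1`
(which is independent of the representative `r'`), and both maps are `R`-linear for the
`R`-module structures given by multiplication in the left tensor factor. -/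
theorem ker_mul_equiv_tensor_quotient :
    -- `θ` is bijective
    Function.Bijective
      (fun x : LinearMap.ker (LinearMap.mul' S R) =>
        ((Submodule.mkQ (LinearMap.range (Algebra.linearMap S R))).lTensor R)
          (x : R ⊗[S] R)) ∧
    -- the formula for the inverse: `r ⊗ r' − r r' ⊗ 1` lies in `ker μ` and is mapped
    -- by `θ` to `r ⊗ π(r')`
    (∀ r r' : R,
      (r ⊗ₜ[S] r' - (r * r') ⊗ₜ[S] (1 : R)) ∈ LinearMap.ker (LinearMap.mul' S R) ∧
      ((Submodule.mkQ (LinearMap.range (Algebra.linearMap S R))).lTensor R)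
          (r ⊗ₜ[S] r' - (r * r') ⊗ₜ[S] (1 : R)) =
        r ⊗ₜ[S] (Submodule.mkQ (LinearMap.range (Algebra.linearMap S R)) r')) ∧
    -- independence of the choice of representative
    (∀ r r' r'' : R,
      Submodule.mkQ (LinearMap.range (Algebra.linearMap S R)) r' =
        Submodule.mkQ (LinearMap.range (Algebra.linearMap S R)) r'' →
      r ⊗ₜ[S] r' - (r * r') ⊗ₜ[S] (1 : R) = r ⊗ₜ[S] r'' - (r * r'') ⊗ₜ[S] (1 : R)) ∧
    -- `R`-linearity of both maps for left-factor multiplication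
    (∀ (a : R) (x : R ⊗[S] R), x ∈ LinearMap.ker (LinearMap.mul' S R) →
      a • x ∈ LinearMap.ker (LinearMap.mul' S R) ∧
      ((Submodule.mkQ (LinearMap.range (Algebra.linearMap S R))).lTensor R) (a • x) =
        a • ((Submodule.mkQ (LinearMap.range (Algebra.linearMap S R))).lTensor R) x) := by
  have hinj : ∀ x : R ⊗[S] R, x ∈ LinearMap.ker (LinearMap.mul' S R) →
      ((Submodule.mkQ (LinearMap.range (Algebra.linearMap S R))).lTensor R) x = 0 →
      x = 0 := by
    intro x hμ hx
    obtain ⟨r, rfl⟩ := exists_eq_tmul_one_of_lTensor_mkQ_eq_zero hx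
    have hr : r = 0 := by simpa using hμ
    rw [hr, TensorProduct.zero_tmul]
  refine ⟨⟨?_, ?_⟩, fun r r' => ⟨tmul_sub_mem_ker_mul' r r', lTensor_mkQ_tmul_sub r r'⟩,
    ?_, ?_⟩
  · intro x y hxy
    apply Subtype.ext
    apply sub_eq_zero.mp
    apply hinj _ (Submodule.sub_mem _ x.2 y.2)
    rw [map_sub]
    exact sub_eq_zero.mpr hxy
  · intro t
    induction t using TensorProduct.induction_on with
    | zero => exact ⟨0, by simp⟩
    | tmul r q =>
      obtain ⟨r', rfl⟩ := Submodule.mkQ_surjective _ q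
      exact ⟨⟨_, tmul_sub_mem_ker_mul' r r'⟩, lTensor_mkQ_tmul_sub r r'⟩
    | add t u ht hu =>
      obtain ⟨x, rfl⟩ := ht
      obtain ⟨y, rfl⟩ := hu
      exact ⟨x + y, by simp⟩
  · intro r r' r'' h
    apply sub_eq_zero.mp
    apply hinj _ (Submodule.sub_mem _ (tmul_sub_mem_ker_mul' r r') (tmul_sub_mem_ker_mul' r r''))
    rw [map_sub, lTensor_mkQ_tmul_sub, lTensor_mkQ_tmul_sub, h, sub_self]
  · intro a x hx
    refine ⟨?_, lTensor_smul_left _ a x⟩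
    rw [LinearMap.mem_ker, mul'_smul_left, LinearMap.mem_ker.mp hx, mul_zero]
end

section
/- Let M be an R-module, ∇ : M → M ⊗[R] C any R-linear map, and set ρ := ∇ + (m ↦ m ⊗ g). Define the R-linear extension ∇¹ : M ⊗[R] C → M ⊗[R] C ⊗[R] C on elementary tensors by ∇¹(m ⊗ c) = ∇(m) ⊗ c + m ⊗ (g ⊗ c − Δ(c) + c ⊗ g). Then the curvature equals the coassociativity defect: ∇¹ ∘ ∇ = (ρ ⊗ id_C) ∘ ρ − (id_M ⊗ Δ) ∘ ρ. Consequently ρ is coassociative if and only if the connection ∇ is flat (∇¹ ∘ ∇ = 0). -/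
/-! Expanding `(ρ ⊗ id) ∘ ρ` with `ρ = ∇ + (· ⊗ g)` gives `(∇ ⊗ id) ∘ ∇`, the two mixed terms, and
`m ⊗ g ⊗ g`. After reassociation the mixed terms are `id ⊗ (g ⊗ ·)` and `id ⊗ (· ⊗ g)` applied to
`∇ m`, which are the outer terms of `d¹`; `(id ⊗ Δ) ∘ ρ` contributes the middle term of `d¹` and,
since `Δ g = g ⊗ g`, cancels `m ⊗ g ⊗ g`. -/

open TensorProduct

variable {R C M : Type*} [CommRing R] [AddCommGroup C] [Module R C] [Coalgebra R C]
  [AddCommGroup M] [Module R M]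

/-- The linear map `m ↦ m ⊗ g`. -/
noncomputable def tmulGrouplike (M : Type*) [AddCommGroup M] [Module R M]
    (g : C) : M →ₗ[R] M ⊗[R] C :=
  (TensorProduct.mk R M C).flip g

/-- The degree-one Amitsur differential `d¹ : C → C ⊗ C`, `c ↦ g ⊗ c − Δ(c) + c ⊗ g`. -/
noncomputable def amitsurD1 (g : C) : C →ₗ[R] C ⊗[R] C :=
  TensorProduct.mk R C C g - Coalgebra.comul (R := R) + (TensorProduct.mk R C C).flip g

/-- The extension `∇¹ : M ⊗ C → M ⊗ (C ⊗ C)` of a connection `∇` by the Leibniz rule: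
`∇¹(m ⊗ c) = ∇(m) ⊗ c + m ⊗ (g ⊗ c − Δ(c) + c ⊗ g)`. -/
noncomputable def connectionExt (g : C) (nabla : M →ₗ[R] M ⊗[R] C) :
    M ⊗[R] C →ₗ[R] M ⊗[R] (C ⊗[R] C) :=
  (TensorProduct.assoc R M C C).toLinearMap.comp (nabla.rTensor C) +
    (amitsurD1 (R := R) g).lTensor M

theorem assoc_tmul_right (g : C) (x : M ⊗[R] C) :
    TensorProduct.assoc R M C C (x ⊗ₜ[R] g) =
      ((TensorProduct.mk R C C).flip g).lTensor M x := by
  induction x with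
  | zero => simp
  | tmul m c => simp
  | add x y hx hy => rw [TensorProduct.add_tmul, map_add, map_add, hx, hy]

theorem assoc_rTensor_tmulGrouplike (g : C) (x : M ⊗[R] C) :
    TensorProduct.assoc R M C C ((tmulGrouplike M g).rTensor C x) =
      (TensorProduct.mk R C C g).lTensor M x := by
  induction x with
  | zero => simp
  | tmul m c => simp [tmulGrouplike]
  | add x y hx hy => simp only [map_add, hx, hy]

/-- Let `R` be a commutative ring, `C` a coassociative counital
`R`-coalgebra, `g ∈ C` grouplike (`Δ g = g ⊗ g`, `ε g = 1`), `M` an `R`-module,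
`∇ : M → M ⊗ C` any `R`-linear map and `ρ := ∇ + (m ↦ m ⊗ g)`.  With
`∇¹(m ⊗ c) = ∇(m) ⊗ c + m ⊗ (g ⊗ c − Δ(c) + c ⊗ g)`, the curvature equals the
coassociativity defect: `∇¹ ∘ ∇ = (ρ ⊗ id) ∘ ρ − (id ⊗ Δ) ∘ ρ` (after the canonical
associativity identification).  Consequently `ρ` is coassociative iff `∇` is flat. -/
theorem curvature_eq_coassociativity_defect
    (g : C) (hg₁ : Coalgebra.comul (R := R) g = g ⊗ₜ[R] g)
    (hg₂ : Coalgebra.counit (R := R) g = (1 : R))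
    (nabla : M →ₗ[R] M ⊗[R] C) :
    ((connectionExt g nabla).comp nabla =
      ((TensorProduct.assoc R M C C).toLinearMap.comp
          (((nabla + tmulGrouplike M g).rTensor C).comp (nabla + tmulGrouplike M g))) -
        ((Coalgebra.comul (R := R)).lTensor M).comp (nabla + tmulGrouplike M g)) ∧
    (((TensorProduct.assoc R M C C).toLinearMap.comp
          (((nabla + tmulGrouplike M g).rTensor C).comp (nabla + tmulGrouplike M g)) =
        ((Coalgebra.comul (R := R)).lTensor M).comp (nabla + tmulGrouplike M g)) ↔
      (connectionExt g nabla).comp nabla = 0) := by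
  have curvature : (connectionExt g nabla).comp nabla =
      ((TensorProduct.assoc R M C C).toLinearMap.comp
          (((nabla + tmulGrouplike M g).rTensor C).comp (nabla + tmulGrouplike M g))) -
        ((Coalgebra.comul (R := R)).lTensor M).comp (nabla + tmulGrouplike M g) := by
    ext m
    have hm : tmulGrouplike M g m = m ⊗ₜ[R] g := rfl
    simp only [connectionExt, amitsurD1, LinearMap.comp_apply, LinearMap.add_apply,
      LinearMap.sub_apply, LinearMap.rTensor_add, LinearMap.lTensor_add, LinearMap.lTensor_sub,
      LinearEquiv.coe_coe, map_add, hm, LinearMap.rTensor_tmul, LinearMap.lTensor_tmul, hg₁,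
      assoc_tmul_right, assoc_rTensor_tmulGrouplike, TensorProduct.mk_apply,
      LinearMap.flip_apply]
    abel
  exact ⟨curvature, by rw [curvature, sub_eq_zero]⟩
end

section
/- Let M be an R-module. The assignments ρ ↦ ∇_ρ := ρ − (m ↦ m ⊗ g) and ∇ ↦ ρ_∇ := ∇ + (m ↦ m ⊗ g) are mutually inverse bijections between (i) the set of right C-comodule structures ρ on M, and (ii) the set of flat connections on M, i.e. R-linear maps ∇ : M → M ⊗[R] C whose range is contained in the image of the canonical map M ⊗[R] (ker ε) → M ⊗[R] C and which satisfy ∇¹ ∘ ∇ = 0, where ∇¹ : M ⊗[R] C → M ⊗[R] C ⊗[R] C is given on elementary tensors by ∇¹(m ⊗ c) = ∇(m) ⊗ c + m ⊗ (g ⊗ c − Δ(c) + c ⊗ g). -/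
/-!
The two assignments are visibly inverse to each other, so only the correspondence of axioms needs
an argument. Put `ρ = ∇ + (m ↦ m ⊗ g)`.

* Since `ε g = 1`, the counit `ε` is surjective, so right exactness of `M ⊗ -` identifies the image
  of `M ⊗ ker ε` in `M ⊗ C` with `ker (id ⊗ ε)`, whether or not `M` is flat. As
  `(id ⊗ ε) (m ⊗ g) = m ⊗ 1`, the counit law for `ρ` says exactly that `(id ⊗ ε) ∘ ∇ = 0`
  (`counit_law_iff_mem_range`).
* Expanding, and using `Δ g = g ⊗ g` to cancel the two terms `m ⊗ g ⊗ g`, the coassociativity defect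
  `(ρ ⊗ id) ∘ ρ - (id ⊗ Δ) ∘ ρ` equals the curvature `∇¹ ∘ ∇` (`coassoc_defect_eq_curvature`).
-/

open TensorProduct

variable {R C M : Type*} [CommRing R] [AddCommGroup C] [Module R C] [Coalgebra R C]
  [AddCommGroup M] [Module R M]

/-- A right `C`-comodule structure on `M`: an `R`-linear map `ρ : M → M ⊗ C`
satisfying the counit law and coassociativity. -/
def IsComodStruct (rho : M →ₗ[R] M ⊗[R] C) : Prop :=
  (∀ m : M, TensorProduct.rid R M ((Coalgebra.counit (R := R)).lTensor M (rho m)) = m) ∧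
  (TensorProduct.assoc R M C C).toLinearMap.comp ((rho.rTensor C).comp rho) =
    ((Coalgebra.comul (R := R)).lTensor M).comp rho

/-- A flat connection on `M`: an `R`-linear map `∇ : M → M ⊗ C` with values in the
image of `M ⊗ (ker ε) → M ⊗ C` and vanishing curvature `∇¹ ∘ ∇ = 0`. -/
noncomputable def IsFlatConnection (g : C) (nabla : M →ₗ[R] M ⊗[R] C) : Prop :=
  (∀ m : M, nabla m ∈
      LinearMap.range
        ((Submodule.subtype (LinearMap.ker (Coalgebra.counit (R := R) (A := C)))).lTensor M)) ∧
  (connectionExt g nabla).comp nabla = 0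

/-- The curvature of `∇` is the coassociativity defect of `ρ = ∇ + (m ↦ m ⊗ g)`. -/
lemma coassoc_defect_eq_curvature (g : C) (hg₁ : Coalgebra.comul (R := R) g = g ⊗ₜ[R] g)
    (nabla : M →ₗ[R] M ⊗[R] C) :
    (TensorProduct.assoc R M C C).toLinearMap.comp
        (((nabla + tmulGrouplike M g).rTensor C).comp (nabla + tmulGrouplike M g)) -
      ((Coalgebra.comul (R := R)).lTensor M).comp (nabla + tmulGrouplike M g) =
    (connectionExt g nabla).comp nabla := by
  -- On `M ⊗ C`, the map `∇¹` is `ρ ⊗ id - id ⊗ Δ` plus right insertion of `g`.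
  have hext : connectionExt g nabla =
      (TensorProduct.assoc R M C C).toLinearMap.comp ((nabla + tmulGrouplike M g).rTensor C) -
        (Coalgebra.comul (R := R)).lTensor M +
        (TensorProduct.assoc R M C C).toLinearMap.comp (tmulGrouplike (M ⊗[R] C) g) := by
    ext m c
    simp [connectionExt, amitsurD1, tmulGrouplike]
    abel
  rw [hext]
  ext m
  simp [tmulGrouplike, hg₁]
  abel

/-- The counit law for `ρ = ∇ + (m ↦ m ⊗ g)` holds at `m` exactly when `∇ m` comes from
`M ⊗ ker ε`. -/
lemma counit_law_iff_mem_range (g : C) (hg₂ : Coalgebra.counit (R := R) g = (1 : R))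
    (nabla : M →ₗ[R] M ⊗[R] C) (m : M) :
    TensorProduct.rid R M
        ((Coalgebra.counit (R := R)).lTensor M ((nabla + tmulGrouplike M g : M →ₗ[R] M ⊗[R] C) m)) = m ↔
      nabla m ∈ LinearMap.range
        ((Submodule.subtype
          (LinearMap.ker (Coalgebra.counit (R := R) (A := C)))).lTensor M) := by
  have hsurj : Function.Surjective (Coalgebra.counit (R := R) (A := C)) :=
    fun r => ⟨r • g, by simp [hg₂]⟩
  have hexact := lTensor_exact M
    (LinearMap.exact_subtype_ker_map (Coalgebra.counit (R := R) (A := C))) hsurj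
  rw [← LinearMap.exact_iff.mp hexact, LinearMap.mem_ker]
  simp [tmulGrouplike, hg₂]

/-- `ρ = ∇ + (m ↦ m ⊗ g)` is a comodule structure if and only if `∇` is a flat connection. -/
lemma isComodStruct_add_iff (g : C) (hg₁ : Coalgebra.comul (R := R) g = g ⊗ₜ[R] g)
    (hg₂ : Coalgebra.counit (R := R) g = (1 : R)) (nabla : M →ₗ[R] M ⊗[R] C) :
    IsComodStruct (nabla + tmulGrouplike M g) ↔ IsFlatConnection g nabla := by
  unfold IsComodStruct IsFlatConnection
  rw [← coassoc_defect_eq_curvature g hg₁ nabla, sub_eq_zero]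
  exact and_congr_left' (forall_congr' (counit_law_iff_mem_range g hg₂ nabla))

/-- Let `R` be a commutative ring, `C` a coassociative counital
`R`-coalgebra, `g ∈ C` grouplike (`Δ g = g ⊗ g`, `ε g = 1`) and `M` an `R`-module.
The assignments `ρ ↦ ∇_ρ = ρ − (m ↦ m ⊗ g)` and `∇ ↦ ρ_∇ = ∇ + (m ↦ m ⊗ g)` are
mutually inverse bijections between right `C`-comodule structures on `M` and flat
connections on `M`. -/
theorem comodule_structures_equiv_flat_connections
    (g : C) (hg₁ : Coalgebra.comul (R := R) g = g ⊗ₜ[R] g)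
    (hg₂ : Coalgebra.counit (R := R) g = (1 : R)) :
    (∀ rho : M →ₗ[R] M ⊗[R] C, IsComodStruct rho →
        IsFlatConnection g (rho - tmulGrouplike M g)) ∧
    (∀ nabla : M →ₗ[R] M ⊗[R] C, IsFlatConnection g nabla →
        IsComodStruct (nabla + tmulGrouplike M g)) ∧
    (∀ rho : M →ₗ[R] M ⊗[R] C, (rho - tmulGrouplike M g) + tmulGrouplike M g = rho) ∧
    (∀ nabla : M →ₗ[R] M ⊗[R] C, (nabla + tmulGrouplike M g) - tmulGrouplike M g = nabla) := by
  refine ⟨fun rho h => ?_, fun nabla h => (isComodStruct_add_iff g hg₁ hg₂ nabla).mpr h,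
    fun rho => sub_add_cancel _ _, fun nabla => add_sub_cancel_right _ _⟩
  rw [← isComodStruct_add_iff g hg₁ hg₂, sub_add_cancel]
  exact h
end
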